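/- Let c ∈ ℂ with Re c > 0 and let x, y be positive real numbers. Then Γ(c) U(c, 2c, x+y) = (1/(4π)) ∫_{−∞}^{∞} Γ((c−it)/2) Γ((c+it)/2) U((c−it)/2, c, x) U((c+it)/2, c, y) dt. Equivalently, in purely integral form: ∫₀^∞ e^{−(x+y)u} u^{c−1} (1+u)^{c−1} du = (1/(4π)) ∫_ℝ (∫₀^∞ e^{−xu} u^{(c−it)/2−1} (1+u)^{(c+it)/2−1} du) (∫₀^∞ e^{−yu} u^{(c+it)/2−1} (1+u)^{(c−it)/2−1} du) dt. -/

import Mathlib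

/-- Confluent hypergeometric function of the second kind via its Laplace-transform
representation, valid for `Re a > 0`, `Re z > 0` (principal branch powers). -/
noncomputable def hypU (a b z : ℂ) : ℂ :=
  (Complex.Gamma a)⁻¹ *
    ∫ t in Set.Ioi (0 : ℝ), Complex.exp (-z * t) * (t : ℂ) ^ (a - 1) * ((1 : ℂ) + t) ^ (b - a - 1)

/-!
In the variable `v = t / (1 + t)` the Laplace representation of `Γ(a) U(a, b, z)` becomes the Mellin
transform at `a` of `exp (-z v / (1 - v)) (1 - v) ^ (-b)` on `(0, 1)`. These kernels multiply by
adding the parameters `b` and `z`, so the addition theorem is Parseval's formula for the Mellin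
transform of a product. As the kernels are bounded, their Mellin transforms on vertical lines are
Fourier transforms of functions in `L¹ ∩ L²`, for which Parseval's formula follows from Plancherel's
theorem without any decay estimate for the transforms.
-/

open MeasureTheory FourierTransform Set
open scoped ContDiff SchwartzMap ComplexConjugate

section Fourier

variable {V F : Type*} [NormedAddCommGroup V] [InnerProductSpace ℝ V] [FiniteDimensional ℝ V]
  [MeasurableSpace V] [BorelSpace V] [NormedAddCommGroup F] [InnerProductSpace ℂ F]
  [CompleteSpace F]

theorem coeFn_fourier_toLp {f : V → F} (hf : Integrable f) (hf₂ : MemLp f 2) :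
    (𝓕 hf₂.toLp : Lp F 2 (volume : Measure V)) =ᵐ[volume] 𝓕 f := by
  have h_cont : Continuous (𝓕 f) :=
    VectorFourier.fourierIntegral_continuous Real.continuous_fourierChar continuous_inner hf
  refine ae_eq_of_integral_contDiff_smul_eq ((Lp.memLp _).locallyIntegrable one_le_two)
    h_cont.locallyIntegrable fun g hg hgc ↦ ?_
  let φ : 𝓢(V, ℂ) := (hgc.comp_left (g := Complex.ofRealCLM) rfl).toSchwartzMap (by fun_prop)
  have hφ (v : V) (y : F) : g v • y = φ v • y := (Complex.coe_smul (g v) y).symm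
  simp only [hφ]
  calc ∫ v, φ v • (𝓕 hf₂.toLp : Lp F 2 (volume : Measure V)) v
    _ = ∫ v, (𝓕 φ) v • hf₂.toLp f v := by
      rw [← Lp.toTemperedDistribution_apply, ← Lp.fourier_toTemperedDistribution_eq,
        TemperedDistribution.fourier_apply, Lp.toTemperedDistribution_apply]
    _ = ∫ v, 𝓕 (φ : V → ℂ) v • f v := by
      refine integral_congr_ae (hf₂.coeFn_toLp.mono fun v hv ↦ ?_)
      simp only [hv, SchwartzMap.fourier_coe]
    _ = ∫ v, φ v • 𝓕 f v := by
      simpa using! VectorFourier.integral_fourierIntegral_smul_eq_flip (L := innerₗ V)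
        Real.continuous_fourierChar continuous_inner φ.integrable hf

theorem integral_inner_fourier_fourier {f g : V → F} (hf : Integrable f) (hf₂ : MemLp f 2)
    (hg : Integrable g) (hg₂ : MemLp g 2) :
    ∫ w, inner ℂ (𝓕 f w) (𝓕 g w) = ∫ v, inner ℂ (f v) (g v) := by
  calc ∫ w, inner ℂ (𝓕 f w) (𝓕 g w)
    _ = inner ℂ (𝓕 hf₂.toLp : Lp F 2 (volume : Measure V)) (𝓕 hg₂.toLp) := by
      rw [L2.inner_def]
      refine integral_congr_ae ?_
      filter_upwards [coeFn_fourier_toLp hf hf₂, coeFn_fourier_toLp hg hg₂] with w hfw hgw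
      rw [hfw, hgw]
    _ = inner ℂ hf₂.toLp hg₂.toLp := Lp.inner_fourier_eq _ _
    _ = ∫ v, inner ℂ (f v) (g v) := by
      rw [L2.inner_def]
      refine integral_congr_ae ?_
      filter_upwards [hf₂.coeFn_toLp, hg₂.coeFn_toLp] with v hfv hgv
      rw [hfv, hgv]

theorem fourier_mul_eq_integral {f g : V → ℂ} (hf : Integrable f) (hf₂ : MemLp f 2)
    (hg : Integrable g) (hg₂ : MemLp g 2) (ξ : V) :
    𝓕 (f * g) ξ = ∫ w, 𝓕 f (ξ - w) * 𝓕 g w := by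
  -- Conjugating and modulating `f` turns the sesquilinear Plancherel identity into a bilinear one.
  let h : V → ℂ := fun v ↦ conj (Real.fourierChar (-inner ℝ v ξ) • f v)
  have h_memLp {p : ENNReal} (hfp : MemLp f p) : MemLp h p := by
    refine hfp.congr_norm ?_ (.of_forall fun v ↦ by simp [h])
    have : Continuous fun v ↦ Real.fourierChar (-inner ℝ v ξ) := by fun_prop
    exact Complex.continuous_conj.comp_aestronglyMeasurable
      (this.aestronglyMeasurable.smul hfp.aestronglyMeasurable)
  have hh : Integrable h := memLp_one_iff_integrable.mp (h_memLp (memLp_one_iff_integrable.mpr hf))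
  have h_fourier (w : V) : conj (𝓕 h w) = 𝓕 f (ξ - w) := by
    rw [Real.fourier_eq, Real.fourier_eq, ← integral_conj]
    refine integral_congr_ae (.of_forall fun v ↦ ?_)
    simp only [h, Circle.smul_def, smul_eq_mul, map_mul, Complex.conj_conj, ← mul_assoc,
      ← Circle.coe_inv_eq_conj, ← Circle.coe_mul, ← AddChar.map_neg_eq_inv,
      ← AddChar.map_add_eq_mul, inner_sub_right]
    ring_nf
  calc 𝓕 (f * g) ξ
    _ = ∫ v, inner ℂ (h v) (g v) := by
      simp [h, Real.fourier_eq, Circle.smul_def, mul_assoc, mul_comm, mul_left_comm]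
    _ = ∫ w, inner ℂ (𝓕 h w) (𝓕 g w) :=
      (integral_inner_fourier_fourier hh (h_memLp hf₂) hg hg₂).symm
    _ = ∫ w, 𝓕 f (ξ - w) * 𝓕 g w := by
      simp only [RCLike.inner_apply, h_fourier, mul_comm]

end Fourier

section Mellin

variable {E : Type*} [NormedAddCommGroup E] [NormedSpace ℂ E]

theorem mellinConvergent_ofReal_iff_integrable {f : ℝ → E} {σ : ℝ} :
    MellinConvergent f σ ↔ Integrable fun u ↦ Real.exp (-σ * u) • f (Real.exp (-u)) := by
  have h_image : (fun u ↦ Real.exp (-u)) '' univ = Ioi 0 := by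
    rw [← image_image Real.exp Neg.neg, image_univ_of_surjective neg_surjective, image_univ,
      Real.range_exp]
  have h_deriv (u : ℝ) : HasDerivAt (fun u ↦ Real.exp (-u)) (-Real.exp (-u)) u := by
    simpa using (hasDerivAt_neg u).exp
  have h_cpow (u : ℝ) : (Real.exp (-u) : ℂ) ^ (σ - 1 : ℂ) = Real.exp (-u * (σ - 1)) := by
    rw [Real.exp_mul, Complex.ofReal_cpow (Real.exp_pos _).le]
    push_cast
    rfl
  rw [MellinConvergent, ← h_image, integrableOn_image_iff_integrableOn_abs_deriv_smul
    MeasurableSet.univ (fun u _ ↦ (h_deriv u).hasDerivWithinAt)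
    (Real.exp_injective.comp neg_injective).injOn, integrableOn_univ]
  refine integrable_congr (.of_forall fun u ↦ ?_)
  simp only [abs_neg, Real.abs_exp, h_cpow, Complex.coe_smul, smul_smul, ← Real.exp_add]
  ring_nf

theorem memLp_two_exp_smul_of_mellinConvergent {f : ℝ → E} {σ : ℝ} (hf : MellinConvergent f σ)
    (hf₂ : MellinConvergent (fun v ↦ (‖f v‖ : ℂ) ^ 2) (2 * σ)) :
    MemLp (fun u ↦ Real.exp (-σ * u) • f (Real.exp (-u))) 2 := by
  rw [memLp_two_iff_integrable_sq_norm
    (mellinConvergent_ofReal_iff_integrable.mp hf).aestronglyMeasurable]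
  rw [← Complex.ofReal_ofNat, ← Complex.ofReal_mul, mellinConvergent_ofReal_iff_integrable] at hf₂
  refine hf₂.norm.congr (.of_forall fun u ↦ ?_)
  simp only [norm_smul, norm_pow, Complex.norm_real, Real.norm_eq_abs, Real.abs_exp, abs_norm,
    mul_pow, ← Real.exp_nat_mul]
  push_cast
  ring_nf

theorem mellin_mul_eq_integral {f g : ℝ → ℂ} {a a' : ℂ}
    (hf : MellinConvergent f a.re) (hf₂ : MellinConvergent (fun v ↦ (‖f v‖ : ℂ) ^ 2) (2 * a.re))
    (hg : MellinConvergent g a'.re)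
    (hg₂ : MellinConvergent (fun v ↦ (‖g v‖ : ℂ) ^ 2) (2 * a'.re)) :
    mellin (f * g) (a + a') =
      1 / (2 * Real.pi) *
        ∫ t : ℝ, mellin f (a - Complex.I * t) * mellin g (a' + Complex.I * t) := by
  let F (u : ℝ) : ℂ := Real.exp (-a.re * u) • f (Real.exp (-u))
  let G (u : ℝ) : ℂ := Real.exp (-a'.re * u) • g (Real.exp (-u))
  let H (w : ℝ) : ℂ := 𝓕 F ((a + a').im / (2 * Real.pi) - w) * 𝓕 G w
  have h_integrand (t : ℝ) : mellin f (a - Complex.I * t) * mellin g (a' + Complex.I * t) =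
      H ((t + a'.im) / (2 * Real.pi)) := by
    have h_left : (a - Complex.I * t).im / (2 * Real.pi) =
        (a + a').im / (2 * Real.pi) - (t + a'.im) / (2 * Real.pi) := by
      simp only [Complex.sub_im, Complex.add_im, Complex.I_mul_im, Complex.ofReal_re]
      ring
    rw [mellin_eq_fourier, mellin_eq_fourier, h_left]
    simp [H, F, G, add_comm]
  have h_mul : (fun u ↦ Real.exp (-(a + a').re * u) • (f * g) (Real.exp (-u))) = F * G := by
    ext u
    simp only [Pi.mul_apply, F, G, Complex.add_re, neg_add, add_mul, Real.exp_add,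
      smul_mul_smul_comm]
  calc mellin (f * g) (a + a')
    _ = 𝓕 (F * G) ((a + a').im / (2 * Real.pi)) := by rw [mellin_eq_fourier, h_mul]
    _ = ∫ w, H w :=
      fourier_mul_eq_integral (mellinConvergent_ofReal_iff_integrable.mp hf)
        (memLp_two_exp_smul_of_mellinConvergent hf hf₂)
        (mellinConvergent_ofReal_iff_integrable.mp hg)
        (memLp_two_exp_smul_of_mellinConvergent hg hg₂) _
    _ = 1 / (2 * Real.pi) * ∫ t : ℝ, H ((t + a'.im) / (2 * Real.pi)) := by
      rw [integral_add_right_eq_self (fun t ↦ H (t / (2 * Real.pi))), Measure.integral_comp_div,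
        abs_of_pos Real.two_pi_pos, Complex.real_smul]
      push_cast
      field_simp
    _ = 1 / (2 * Real.pi) *
        ∫ t : ℝ, mellin f (a - Complex.I * t) * mellin g (a' + Complex.I * t) := by
      simp only [h_integrand]

theorem mellinConvergent_of_norm_le_of_eq_zero {f : ℝ → E} {s : ℂ} {C : ℝ}
    (hf : AEStronglyMeasurable f) (hC : ∀ v, ‖f v‖ ≤ C) (h_zero : ∀ v, 1 ≤ v → f v = 0)
    (hs : 0 < s.re) : MellinConvergent f s := by
  have h_loc : LocallyIntegrable f :=
    (memLp_top_of_bound hf C (.of_forall hC)).locallyIntegrable le_top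
  refine mellinConvergent_of_isBigO_rpow (a := s.re + 1) (b := 0) (h_loc.locallyIntegrableOn _)
    ?_ (lt_add_one _) ?_ hs
  · refine Asymptotics.IsBigO.of_bound 0 ?_
    filter_upwards [Filter.eventually_ge_atTop 1] with v hv
    simp [h_zero v hv]
  · exact Asymptotics.IsBigO.of_bound C (.of_forall fun v ↦ by simpa using hC v)

end Mellin

section LaguerreKernel

open Complex

/-- The kernel `exp (-z v / (1 - v)) (1 - v) ^ (-b)` on `(0, 1)`, extended by zero. It is the
generating function `∑ Lₙ^(b-1)(z) vⁿ` of the Laguerre polynomials, and its Mellin transform at `a`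
is `Γ(a) U(a, b, z)`. -/
noncomputable def laguerreKernel (b z : ℂ) : ℝ → ℂ :=
  (Ioo 0 1).indicator fun v ↦ cexp (-z * (v / (1 - v))) * (1 - v : ℂ) ^ (-b)

theorem laguerreKernel_mul (b b' z z' : ℂ) :
    laguerreKernel b z * laguerreKernel b' z' = laguerreKernel (b + b') (z + z') := by
  refine (indicator_mul _ _ _).symm.trans ?_
  refine indicator_congr fun v hv ↦ ?_
  have h_ne : (1 - v : ℂ) ≠ 0 := by exact_mod_cast (sub_pos.mpr hv.2).ne'
  simp only [neg_add, add_mul, Complex.exp_add, Complex.cpow_add _ _ h_ne]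
  ring

theorem laguerreKernel_eq_zero (b z : ℂ) {v : ℝ} (hv : 1 ≤ v) : laguerreKernel b z v = 0 :=
  indicator_of_notMem (fun h ↦ h.2.not_ge hv) _

theorem measurable_laguerreKernel (b z : ℂ) : Measurable (laguerreKernel b z) :=
  Measurable.indicator (by fun_prop) measurableSet_Ioo

theorem exists_rpow_mul_exp_neg_mul_le (β : ℝ) {x : ℝ} (hx : 0 < x) :
    ∃ C, ∀ w, 1 ≤ w → w ^ β * Real.exp (-x * w) ≤ C := by
  obtain ⟨n, hn⟩ := exists_nat_ge β
  refine ⟨n.factorial / x ^ n, fun w hw ↦ ?_⟩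
  have h_exp : (x * w) ^ n / n.factorial ≤ Real.exp (x * w) :=
    Real.pow_div_factorial_le_exp _ (by positivity) n
  calc w ^ β * Real.exp (-x * w)
    _ ≤ w ^ n * Real.exp (-x * w) := by
      gcongr
      exact_mod_cast Real.rpow_le_rpow_of_exponent_le hw hn
    _ ≤ n.factorial / x ^ n := by
      rw [neg_mul, Real.exp_neg, ← div_eq_mul_inv, div_le_div_iff₀ (by positivity) (by positivity)]
      rw [div_le_iff₀ (by positivity), mul_pow] at h_exp
      linarith

theorem exists_norm_laguerreKernel_le (b : ℂ) {z : ℂ} (hz : 0 < z.re) :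
    ∃ C, ∀ v, ‖laguerreKernel b z v‖ ≤ C := by
  obtain ⟨C, hC⟩ := exists_rpow_mul_exp_neg_mul_le b.re hz
  have hC_nonneg : 0 ≤ C := le_trans (by positivity) (hC 1 le_rfl)
  refine ⟨Real.exp z.re * C, fun v ↦ ?_⟩
  by_cases hv : v ∈ Ioo 0 1
  · have hv_pos : 0 < 1 - v := sub_pos.mpr hv.2
    have h_one_le : 1 ≤ (1 - v)⁻¹ := (one_le_inv₀ hv_pos).mpr (by linarith [hv.1])
    have h_div : v / (1 - v) = (1 - v)⁻¹ - 1 := by field_simp; ring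
    calc ‖laguerreKernel b z v‖
      _ = Real.exp (-z.re * (v / (1 - v))) * (1 - v) ^ (-b.re) := by
        rw [laguerreKernel, indicator_of_mem hv, norm_mul, Complex.norm_exp, ← ofReal_one,
          ← ofReal_sub, Complex.norm_cpow_eq_rpow_re_of_pos hv_pos, ← ofReal_div, re_mul_ofReal,
          neg_re, neg_re]
      _ = Real.exp z.re * ((1 - v)⁻¹ ^ b.re * Real.exp (-z.re * (1 - v)⁻¹)) := by
        rw [h_div, Real.inv_rpow hv_pos.le, ← Real.rpow_neg hv_pos.le, mul_left_comm,
          ← Real.exp_add]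
        ring_nf
      _ ≤ Real.exp z.re * C := by gcongr; exact hC _ h_one_le
  · rw [laguerreKernel, indicator_of_notMem hv, norm_zero]
    positivity

theorem mellinConvergent_laguerreKernel (b : ℂ) {s z : ℂ} (hs : 0 < s.re) (hz : 0 < z.re) :
    MellinConvergent (laguerreKernel b z) s := by
  obtain ⟨C, hC⟩ := exists_norm_laguerreKernel_le b hz
  exact mellinConvergent_of_norm_le_of_eq_zero (measurable_laguerreKernel b z).aestronglyMeasurable
    hC (fun _ ↦ laguerreKernel_eq_zero b z) hs

theorem mellinConvergent_norm_sq_laguerreKernel (b : ℂ) {s z : ℂ} (hs : 0 < s.re)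
    (hz : 0 < z.re) : MellinConvergent (fun v ↦ (‖laguerreKernel b z v‖ : ℂ) ^ 2) s := by
  obtain ⟨C, hC⟩ := exists_norm_laguerreKernel_le b hz
  refine mellinConvergent_of_norm_le_of_eq_zero (C := C ^ 2) ?_ (fun v ↦ ?_) (fun v hv ↦ ?_) hs
  · have := measurable_laguerreKernel b z
    fun_prop
  · simpa using pow_le_pow_left₀ (norm_nonneg _) (hC v) 2
  · simp [laguerreKernel_eq_zero b z hv]

theorem integral_Ioi_eq_integral_Ioo_div_one_sub {E : Type*} [NormedAddCommGroup E]
    [NormedSpace ℝ E] (g : ℝ → E) :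
    ∫ t in Ioi 0, g t = ∫ v in Ioo 0 1, ((1 - v) ^ 2)⁻¹ • g (v / (1 - v)) := by
  have h_deriv (v : ℝ) (hv : v ∈ Ioo 0 1) :
      HasDerivWithinAt (fun v ↦ v / (1 - v)) ((1 - v) ^ 2)⁻¹ (Ioo 0 1) v := by
    have h_ne : 1 - v ≠ 0 := (sub_pos.mpr hv.2).ne'
    refine (((hasDerivAt_id' v).div ((hasDerivAt_id' v).const_sub 1) h_ne).congr_deriv
      ?_).hasDerivWithinAt
    ring
  have h_bij : BijOn (fun v : ℝ ↦ v / (1 - v)) (Ioo 0 1) (Ioi 0) := by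
    refine InvOn.bijOn (f' := fun t ↦ t / (1 + t)) ⟨fun v hv ↦ ?_, fun t ht ↦ ?_⟩
      (fun v hv ↦ div_pos hv.1 (sub_pos.mpr hv.2)) fun t ht ↦ ?_
    · have h_ne : 1 - v ≠ 0 := (sub_pos.mpr hv.2).ne'
      simp only
      field_simp
      ring
    · have h_ne : 1 + t ≠ 0 := by have := mem_Ioi.mp ht; positivity
      simp only
      field_simp
      ring
    · have h_pos : 0 < t := ht
      exact ⟨by positivity, (div_lt_one (by positivity)).mpr (lt_one_add t)⟩
  rw [← h_bij.image_eq, integral_image_eq_integral_abs_deriv_smul measurableSet_Ioo h_deriv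
    h_bij.injOn]
  simp only [abs_inv, abs_sq]

theorem inv_cpow_one_sub {v : ℝ} (hv : v < 1) (s : ℂ) :
    (1 - v : ℂ)⁻¹ ^ s = (1 - v : ℂ) ^ (-s) := by
  rw [inv_cpow, cpow_neg]
  rw [← ofReal_one, ← ofReal_sub, arg_ofReal_of_nonneg (sub_pos.mpr hv).le]
  exact Real.pi_ne_zero.symm

theorem hypU_integrand_div_one_sub (a b z : ℂ) {v : ℝ} (hv : v ∈ Ioo 0 1) :
    ((1 - v) ^ 2)⁻¹ • (cexp (-z * (v / (1 - v) : ℝ)) * ((v / (1 - v) : ℝ) : ℂ) ^ (a - 1) *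
      (1 + (v / (1 - v) : ℝ) : ℂ) ^ (b - a - 1)) = (v : ℂ) ^ (a - 1) • laguerreKernel b z v := by
  have h_pos : 0 < 1 - v := sub_pos.mpr hv.2
  have h_ne : (1 - v : ℂ) ≠ 0 := by exact_mod_cast h_pos.ne'
  have h_div_cpow : (v / (1 - v) : ℂ) ^ (a - 1) = (v : ℂ) ^ (a - 1) * (1 - v : ℂ) ^ (1 - a) := by
    have := mul_cpow_ofReal_nonneg hv.1.le (inv_nonneg.mpr h_pos.le) (a - 1)
    push_cast at this
    rw [div_eq_mul_inv, this, inv_cpow_one_sub hv.2, neg_sub]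
  have h_one_add : (1 + v / (1 - v) : ℂ) = (1 - v : ℂ)⁻¹ := by
    field_simp
    ring
  have h_cpow : (1 - v : ℂ) ^ (-b) =
      ((1 - v : ℂ) ^ 2)⁻¹ * (1 - v : ℂ) ^ (1 - a) * (1 - v : ℂ) ^ (-(b - a - 1)) := by
    rw [← cpow_ofNat, ← cpow_neg, ← cpow_add _ _ h_ne, ← cpow_add _ _ h_ne]
    ring_nf
  rw [laguerreKernel, indicator_of_mem hv, Complex.real_smul, smul_eq_mul]
  push_cast
  rw [h_div_cpow, h_one_add, inv_cpow_one_sub hv.2, h_cpow]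
  ring

theorem Gamma_mul_hypU {a : ℂ} (ha : 0 < a.re) (b z : ℂ) :
    Complex.Gamma a * hypU a b z = mellin (laguerreKernel b z) a := by
  rw [hypU, mul_inv_cancel_left₀ (Gamma_ne_zero_of_re_pos ha),
    integral_Ioi_eq_integral_Ioo_div_one_sub]
  calc _ = ∫ v in Ioo (0 : ℝ) 1, (v : ℂ) ^ (a - 1) • laguerreKernel b z v :=
        setIntegral_congr_fun measurableSet_Ioo fun v hv ↦ hypU_integrand_div_one_sub a b z hv
    _ = mellin (laguerreKernel b z) a := by
      refine (setIntegral_eq_of_subset_of_forall_sdiff_eq_zero measurableSet_Ioi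
        Ioo_subset_Ioi_self fun v hv ↦ ?_).symm
      rw [laguerreKernel, indicator_of_notMem hv.2, smul_zero]

end LaguerreKernel

theorem magnus_addition_general {a a' x y : ℂ} (b b' : ℂ) (ha : 0 < a.re) (ha' : 0 < a'.re)
    (hx : 0 < x.re) (hy : 0 < y.re) :
    Complex.Gamma (a + a') * hypU (a + a') (b + b') (x + y) =
      (1 / (4 * (Real.pi : ℂ))) *
        ∫ t : ℝ,
          Complex.Gamma (a - Complex.I * t / 2) * Complex.Gamma (a' + Complex.I * t / 2) *
          hypU (a - Complex.I * t / 2) b x * hypU (a' + Complex.I * t / 2) b' y := by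
  let M (t : ℝ) : ℂ := mellin (laguerreKernel b x) (a - Complex.I * t) *
    mellin (laguerreKernel b' y) (a' + Complex.I * t)
  have h_integrand (t : ℝ) :
      Complex.Gamma (a - Complex.I * t / 2) * Complex.Gamma (a' + Complex.I * t / 2) *
        hypU (a - Complex.I * t / 2) b x * hypU (a' + Complex.I * t / 2) b' y = M (t / 2) := by
    push_cast [M]
    rw [← mul_div_assoc, ← Gamma_mul_hypU (by simpa using ha),
      ← Gamma_mul_hypU (by simpa using ha')]
    ring
  simp only [h_integrand]
  rw [Gamma_mul_hypU (add_pos ha ha'), ← laguerreKernel_mul, Measure.integral_comp_div,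
    mellin_mul_eq_integral (mellinConvergent_laguerreKernel b ha hx)
      (mellinConvergent_norm_sq_laguerreKernel b (by simpa using ha) hx)
      (mellinConvergent_laguerreKernel b' ha' hy)
      (mellinConvergent_norm_sq_laguerreKernel b' (by simpa using ha') hy),
    abs_of_pos two_pos, Complex.real_smul, Complex.ofReal_ofNat]
  ring

/-- Magnus' 1946 integral addition theorem for `x, y > 0` real:
`Γ(c) U(c,2c,x+y) = (1/(4π)) ∫_ℝ Γ((c-it)/2) Γ((c+it)/2) U((c-it)/2,c,x) U((c+it)/2,c,y) dt`. -/
theorem magnus_addition (c : ℂ) (x y : ℝ) (hc : 0 < c.re) (hx : 0 < x) (hy : 0 < y) :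
    Complex.Gamma c * hypU c (2 * c) ((x : ℂ) + (y : ℂ)) =
      (1 / (4 * (Real.pi : ℂ))) *
        ∫ t : ℝ,
          Complex.Gamma ((c - Complex.I * t) / 2) * Complex.Gamma ((c + Complex.I * t) / 2) *
          hypU ((c - Complex.I * t) / 2) c (x : ℂ) * hypU ((c + Complex.I * t) / 2) c (y : ℂ) := by
  have hc₂ : 0 < (c / 2).re := by simpa using hc
  simpa only [add_halves, two_mul, sub_div, add_div] using
    magnus_addition_general (x := x) (y := y) c c hc₂ hc₂ hx hy
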